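/- Let p ≥ 3 be an odd integer and s ≥ 1 an integer, and set q = p·s + 1 and r = p·s + 2. Then the tuple (e₀, p′, q′, r′) = (−1, (p−1)/2, s, (s·(p−1)+2)/2) consists of integers satisfying 0 < p′ < p, 0 < q′ < q, 0 < r′ < r, and the Seifert relation holds: (−1)·p·q·r + ((p−1)/2)·q·r + p·s·r + p·q·((s·(p−1)+2)/2) = −1. -/

import Mathlib

/-!
Write `p = 2k + 1`, so that `p' = k` and `r' = s k + 1`. Substituting `p s = q - 1` turns the
left-hand side of the Seifert relation into `k q (q + 1 - r) + (q - r)`, which is `-1` because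
`r = q + 1`. The upper bounds are then automatic: for `e₀ = -1` the relation makes
`p' q r + p q' r + p q r'`, a sum of positive terms, smaller than `p q r`, so `p' q r < p q r`, and
similarly for the other two terms.
-/

/-- `(e, p', q', r')` is a Seifert data for `(p, q, r)`; `e` is the paper's `e₀`. Pairwise
coprimality of `p, q, r` is not a field, since any common divisor of two of them divides the
left-hand side of `relation`. -/
structure IsSeifertData (p q r e p' q' r' : ℤ) : Prop where
  p'_mem : p' ∈ Set.Ioo 0 p
  q'_mem : q' ∈ Set.Ioo 0 q
  r'_mem : r' ∈ Set.Ioo 0 r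
  relation : e * p * q * r + p' * q * r + p * q' * r + p * q * r' = -1

theorem IsSeifertData.of_pos {p q r p' q' r' : ℤ} (hp : 0 < p) (hq : 0 < q) (hr : 0 < r)
    (hp' : 0 < p') (hq' : 0 < q') (hr' : 0 < r')
    (relation : (-1) * p * q * r + p' * q * r + p * q' * r + p * q * r' = -1) :
    IsSeifertData p q r (-1) p' q' r' := by
  have hp'qr : 0 < p' * q * r := by positivity
  have hpq'r : 0 < p * q' * r := by positivity
  have hpqr' : 0 < p * q * r' := by positivity
  have p'_lt : p' < p :=
    lt_of_mul_lt_mul_right (by linarith : p' * (q * r) < p * (q * r)) (by positivity)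
  have q'_lt : q' < q :=
    lt_of_mul_lt_mul_right (by linarith : q' * (p * r) < q * (p * r)) (by positivity)
  have r'_lt : r' < r :=
    lt_of_mul_lt_mul_right (by linarith : r' * (p * q) < r * (p * q)) (by positivity)
  exact ⟨⟨hp', p'_lt⟩, ⟨hq', q'_lt⟩, ⟨hr', r'_lt⟩, relation⟩

theorem seifert_relation_of_eq {R : Type*} [CommRing R] {p q r s k : R}
    (hp : p = 2 * k + 1) (hq : q = p * s + 1) (hr : r = q + 1) :
    (-1) * p * q * r + k * q * r + p * s * r + p * q * (s * k + 1) = -1 := by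
  have hps : p * s = q - 1 := eq_sub_of_add_eq hq.symm
  calc (-1) * p * q * r + k * q * r + p * s * r + p * q * (s * k + 1)
    _ = (-1) * p * q * r + k * q * r + (q - 1) * r + q * ((q - 1) * k + p) := by
      rw [← hps]; ring
    _ = k * q * (q + 1 - r) + (q - r) := by rw [hp]; ring
    _ = -1 := by rw [hr]; ring

theorem isSeifertData_of_two_mul_eq {p s p' r' : ℤ} (hp' : 2 * p' = p - 1)
    (hr' : 2 * r' = s * (p - 1) + 2) (p'_pos : 0 < p') (s_pos : 0 < s) :
    IsSeifertData p (p * s + 1) (p * s + 2) (-1) p' s r' := by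
  have p_eq : p = 2 * p' + 1 := by linarith
  have r'_eq : r' = s * p' + 1 :=
    mul_left_cancel₀ two_ne_zero (by linear_combination hr' - s * hp')
  have p_pos : 0 < p := by linarith
  rw [r'_eq]
  exact .of_pos p_pos (by positivity) (by positivity) p'_pos s_pos (by positivity)
    (seifert_relation_of_eq p_eq rfl (by ring))

/-- Seifert data of the Brieskorn sphere `Σ(p, ps+1, ps+2)` for `p ≥ 3` odd and `s ≥ 1`. -/
theorem seifert_data_brieskorn_plus (p s : ℤ) (hp : 3 ≤ p) (hodd : Odd p) (hs : 1 ≤ s) :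
    let q := p * s + 1
    let r := p * s + 2
    let p' := (p - 1) / 2
    let q' := s
    let r' := (s * (p - 1) + 2) / 2
    2 * p' = p - 1 ∧ 2 * r' = s * (p - 1) + 2 ∧
    0 < p' ∧ p' < p ∧ 0 < q' ∧ q' < q ∧ 0 < r' ∧ r' < r ∧
    (-1) * p * q * r + p' * q * r + p * q' * r + p * q * r' = -1 := by
  intro q r p' q' r'
  have p_sub_one_even : Even (p - 1) := hodd.sub_odd odd_one
  have two_mul_p' : 2 * p' = p - 1 := Int.two_mul_ediv_two_of_even p_sub_one_even
  have two_mul_r' : 2 * r' = s * (p - 1) + 2 :=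
    Int.two_mul_ediv_two_of_even ((p_sub_one_even.mul_left s).add even_two)
  have p'_pos : 0 < p' := by linarith
  obtain ⟨⟨_, p'_lt⟩, ⟨q'_pos, q'_lt⟩, ⟨r'_pos, r'_lt⟩, relation⟩ :=
    isSeifertData_of_two_mul_eq two_mul_p' two_mul_r' p'_pos hs
  exact ⟨two_mul_p', two_mul_r', p'_pos, p'_lt, q'_pos, q'_lt, r'_pos, r'_lt, relation⟩
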